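/- arXiv:1905.04441 — 2 statements merged into one kernel-verified Lean document; each statement's English description precedes it below -/
import Mathlib

section
/- Least-squares recovery with a subspace prior (unconstrained, non-direct-sum case): assume R̃_{aa}(i) ≠ 0 for every i ∈ {0,…,K−1}, and let H ∈ ℂ^{K×K} be the diagonal matrix with i-th diagonal entry 1/R̃_{sa}(i) if R̃_{sa}(i) ≠ 0 and 0 otherwise. Then for every x in the PGS subspace generated by a, the reconstruction x̃ := A H S^* x lies in the PGS subspace, satisfies S^* x̃ = S^* x, and is the unique element of minimal Euclidean norm in the set {y ∈ PGS subspace : S^* y = S^* x}. -/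
open Matrix BigOperators

noncomputable section

/-- Downsampling matrix `D ∈ ℂ^{K×N}` with `N = M·K`: `D i j = 1` iff `j ≡ i (mod K)`. -/
def Dmat (K M : ℕ) : Matrix (Fin K) (Fin (M * K)) ℂ :=
  Matrix.of fun i j => if (j : ℕ) % K = (i : ℕ) then 1 else 0

/-- The index `i + K·ℓ` viewed in `Fin (M·K)`. -/
def fold (K M : ℕ) (i : Fin K) (ℓ : Fin M) : Fin (M * K) :=
  ⟨(i : ℕ) + K * (ℓ : ℕ), by
    have hi := i.isLt
    calc (i : ℕ) + K * (ℓ : ℕ) < K + K * (ℓ : ℕ) := by omega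
      _ = K * ((ℓ : ℕ) + 1) := by ring
      _ ≤ K * M := Nat.mul_le_mul_left K ℓ.isLt
      _ = M * K := Nat.mul_comm K M⟩

/-- Sampled cross-correlation `R̃_{fg}(i) = ∑_{ℓ<M} f(i+Kℓ) g(i+Kℓ)`. -/
def Rtil (K M : ℕ) (f g : Fin (M * K) → ℝ) (i : Fin K) : ℝ :=
  ∑ ℓ : Fin M, f (fold K M i ℓ) * g (fold K M i ℓ)

/-- Sampling matrix `S^* = D diag(s) U^*`. -/
def SamplingMat (K M : ℕ) (U : Matrix (Fin (M * K)) (Fin (M * K)) ℂ)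
    (s : Fin (M * K) → ℝ) : Matrix (Fin K) (Fin (M * K)) ℂ :=
  Dmat K M * Matrix.diagonal (fun j => (s j : ℂ)) * Uᴴ

/-- Synthesis matrix `A = U diag(a) Dᵀ`. -/
def SynthesisMat (K M : ℕ) (U : Matrix (Fin (M * K)) (Fin (M * K)) ℂ)
    (a : Fin (M * K) → ℝ) : Matrix (Fin (M * K)) (Fin K) ℂ :=
  U * Matrix.diagonal (fun j => (a j : ℂ)) * (Dmat K M)ᵀ

/-!
`A^*` is the sampling matrix with response `a`, so by unitarity of `U` both `S^* A` and `A^* A` are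
diagonal, with entries `R̃_{sa}` and `R̃_{aa}`. Hence `H` is a generalized inverse of `S^* A`, which
gives consistency. Two consistent elements of the subspace differ by some `A e` with `e` supported
where `R̃_{sa} = 0`, whereas `x̃ = A c` with `c` supported where `R̃_{sa} ≠ 0`. As `A^* A` is
diagonal, `x̃ ⟂ A e`, and Pythagoras gives strict minimality.
-/

section Pythagoras

variable {𝕜 ι : Type*} [RCLike 𝕜] [Fintype ι]

lemma sum_norm_sq_add_of_star_dotProduct_eq_zero {u v : ι → 𝕜} (huv : star u ⬝ᵥ v = 0) :
    ∑ i, ‖(u + v) i‖ ^ 2 = ∑ i, ‖u i‖ ^ 2 + ∑ i, ‖v i‖ ^ 2 := by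
  have h_inner : inner 𝕜 (WithLp.toLp 2 u) (WithLp.toLp 2 v) = 0 := by
    rw [EuclideanSpace.inner_toLp_toLp, dotProduct_comm, huv]
  simpa only [← WithLp.toLp_add, ← pow_two, EuclideanSpace.norm_sq_eq] using
    norm_add_sq_eq_norm_sq_add_norm_sq_of_inner_eq_zero _ _ h_inner

lemma sum_norm_sq_lt_of_star_dotProduct_sub_eq_zero {u w : ι → 𝕜}
    (huw : star u ⬝ᵥ (w - u) = 0) (hne : w ≠ u) :
    ∑ i, ‖u i‖ ^ 2 < ∑ i, ‖w i‖ ^ 2 := by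
  obtain ⟨i, hi⟩ := Function.ne_iff.mp (sub_ne_zero.mpr hne)
  have h_pos : 0 < ∑ i, ‖(w - u) i‖ ^ 2 :=
    Finset.sum_pos' (fun _ _ => by positivity)
      ⟨i, Finset.mem_univ i, pow_pos (norm_pos_iff.mpr hi) 2⟩
  have h_pyth := sum_norm_sq_add_of_star_dotProduct_eq_zero huw
  rw [add_sub_cancel] at h_pyth
  linarith

end Pythagoras

section DiagonalRecovery

-- `diagonal r⁻¹` is the Moore–Penrose inverse of `diagonal r`, because `0⁻¹ = 0`.
variable {𝕜 m n : Type*} [DivisionSemiring 𝕜] [Fintype m] [Fintype n] [DecidableEq n]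
  {S : Matrix n m 𝕜} {A : Matrix m n 𝕜} {r g : n → 𝕜}

lemma mulVec_diagonal_inv_recovery (hSA : S * A = diagonal r) (d : n → 𝕜) :
    S *ᵥ (A *ᵥ (diagonal r⁻¹ *ᵥ (S *ᵥ (A *ᵥ d)))) = S *ᵥ (A *ᵥ d) := by
  have h_ginv : diagonal r * diagonal r⁻¹ * diagonal r = diagonal r := by
    simp only [diagonal_mul_diagonal, Pi.inv_apply, mul_inv_mul_cancel]
  calc S *ᵥ (A *ᵥ (diagonal r⁻¹ *ᵥ (S *ᵥ (A *ᵥ d))))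
    _ = (S * A * diagonal r⁻¹ * (S * A)) *ᵥ d := by simp only [mulVec_mulVec, Matrix.mul_assoc]
    _ = (S * A) *ᵥ d := by rw [hSA, h_ginv]
    _ = S *ᵥ (A *ᵥ d) := (mulVec_mulVec d S A).symm

lemma star_mulVec_diagonal_inv_dotProduct_eq_zero [StarRing 𝕜]
    (hSA : S * A = diagonal r) (hAA : Aᴴ * A = diagonal g) (c : n → 𝕜) {e : n → 𝕜}
    (he : S *ᵥ (A *ᵥ e) = 0) :
    star (A *ᵥ (diagonal r⁻¹ *ᵥ c)) ⬝ᵥ (A *ᵥ e) = 0 := by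
  rw [star_mulVec, ← dotProduct_mulVec, mulVec_mulVec, hAA]
  refine Finset.sum_eq_zero fun i _ => ?_
  have hre : r i * e i = 0 := by
    simpa only [mulVec_mulVec, hSA, mulVec_diagonal, Pi.zero_apply] using congrFun he i
  rcases mul_eq_zero.mp hre with hri | hei <;> simp [mulVec_diagonal, *]

end DiagonalRecovery

lemma sum_norm_sq_diagonal_inv_recovery_lt {𝕜 m n : Type*} [RCLike 𝕜] [Fintype m] [Fintype n]
    [DecidableEq n] {S : Matrix n m 𝕜} {A : Matrix m n 𝕜} {r g : n → 𝕜}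
    (hSA : S * A = diagonal r) (hAA : Aᴴ * A = diagonal g) {c f : n → 𝕜}
    (hf : S *ᵥ (A *ᵥ f) = S *ᵥ (A *ᵥ (diagonal r⁻¹ *ᵥ c)))
    (hne : A *ᵥ f ≠ A *ᵥ (diagonal r⁻¹ *ᵥ c)) :
    ∑ i, ‖(A *ᵥ (diagonal r⁻¹ *ᵥ c)) i‖ ^ 2 < ∑ i, ‖(A *ᵥ f) i‖ ^ 2 := by
  refine sum_norm_sq_lt_of_star_dotProduct_sub_eq_zero ?_ hne
  rw [← mulVec_sub]
  refine star_mulVec_diagonal_inv_dotProduct_eq_zero hSA hAA c ?_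
  rw [mulVec_sub, mulVec_sub, hf, sub_self]

section PeriodicGraphSpectrum

variable {K M : ℕ}

lemma Dmat_finProdFinEquiv (i k : Fin K) (ℓ : Fin M) :
    Dmat K M i (finProdFinEquiv (ℓ, k)) = if k = i then 1 else 0 := by
  simp [Dmat, Nat.mod_eq_of_lt k.isLt, Fin.ext_iff]

lemma Dmat_mul_diagonal_mul_transpose (f : Fin (M * K) → ℂ) :
    Dmat K M * diagonal f * (Dmat K M)ᵀ = diagonal fun i => ∑ ℓ, f (fold K M i ℓ) := by
  ext i k
  rw [mul_apply, ← finProdFinEquiv.sum_comp, Fintype.sum_prod_type]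
  simp only [mul_diagonal, transpose_apply, Dmat_finProdFinEquiv]
  rcases eq_or_ne i k with rfl | hik
  · have h_fold (ℓ : Fin M) : finProdFinEquiv (ℓ, i) = fold K M i ℓ := rfl
    simp [h_fold]
  · simp [hik, hik.symm]

lemma conjTranspose_transpose_Dmat : (Dmat K M)ᵀᴴ = Dmat K M := by
  ext i j
  simp [Dmat, apply_ite]

lemma conjTranspose_SynthesisMat (U : Matrix (Fin (M * K)) (Fin (M * K)) ℂ)
    (a : Fin (M * K) → ℝ) : (SynthesisMat K M U a)ᴴ = SamplingMat K M U a := by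
  have h_real : star (fun j => (a j : ℂ)) = fun j => (a j : ℂ) :=
    funext fun j => Complex.conj_ofReal (a j)
  rw [SynthesisMat, SamplingMat, conjTranspose_mul, conjTranspose_mul,
    conjTranspose_transpose_Dmat, diagonal_conjTranspose, h_real, Matrix.mul_assoc]

lemma SamplingMat_mul_SynthesisMat {U : Matrix (Fin (M * K)) (Fin (M * K)) ℂ}
    (hU : U ∈ unitaryGroup (Fin (M * K)) ℂ) (s a : Fin (M * K) → ℝ) :
    SamplingMat K M U s * SynthesisMat K M U a = diagonal fun i => (Rtil K M s a i : ℂ) :=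
  calc SamplingMat K M U s * SynthesisMat K M U a
    _ = Dmat K M * (diagonal (fun j => (s j : ℂ)) * (Uᴴ * U) * diagonal (fun j => (a j : ℂ))) *
          (Dmat K M)ᵀ := by simp only [SamplingMat, SynthesisMat, Matrix.mul_assoc]
    _ = Dmat K M * diagonal (fun j => (s j : ℂ) * a j) * (Dmat K M)ᵀ := by
      rw [← star_eq_conjTranspose, mem_unitaryGroup_iff'.mp hU, Matrix.mul_one,
        diagonal_mul_diagonal]
    _ = diagonal fun i => (Rtil K M s a i : ℂ) := by
      simp only [Dmat_mul_diagonal_mul_transpose, Rtil, Complex.ofReal_sum, Complex.ofReal_mul]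

end PeriodicGraphSpectrum

theorem subspace_prior_least_squares_recovery_general {K M : ℕ}
    {U : Matrix (Fin (M * K)) (Fin (M * K)) ℂ}
    (hU : U ∈ Matrix.unitaryGroup (Fin (M * K)) ℂ)
    (s a : Fin (M * K) → ℝ)
    {x xt : Fin (M * K) → ℂ}
    (hx : ∃ d : Fin K → ℂ, x = (SynthesisMat K M U a).mulVec d)
    (hxt : xt = (SynthesisMat K M U a).mulVec
      ((Matrix.diagonal (fun i : Fin K =>
          if Rtil K M s a i ≠ 0 then ((Rtil K M s a i : ℂ))⁻¹ else 0)).mulVec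
        ((SamplingMat K M U s).mulVec x))) :
    (∃ d : Fin K → ℂ, xt = (SynthesisMat K M U a).mulVec d)
    ∧ (SamplingMat K M U s).mulVec xt = (SamplingMat K M U s).mulVec x
    ∧ ∀ y : Fin (M * K) → ℂ,
        (∃ d : Fin K → ℂ, y = (SynthesisMat K M U a).mulVec d) →
        (SamplingMat K M U s).mulVec y = (SamplingMat K M U s).mulVec x →
        y ≠ xt → ∑ i, ‖xt i‖ ^ 2 < ∑ i, ‖y i‖ ^ 2 := by
  set r : Fin K → ℂ := fun i => (Rtil K M s a i : ℂ) with hr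
  have h_pinv : (fun i => if Rtil K M s a i ≠ 0 then (Rtil K M s a i : ℂ)⁻¹ else 0) = r⁻¹ := by
    ext i
    by_cases h : Rtil K M s a i = 0 <;> simp [hr, h]
  have hSA : SamplingMat K M U s * SynthesisMat K M U a = diagonal r :=
    SamplingMat_mul_SynthesisMat hU s a
  have hAA : (SynthesisMat K M U a)ᴴ * SynthesisMat K M U a =
      diagonal fun i => (Rtil K M a a i : ℂ) := by
    rw [conjTranspose_SynthesisMat, SamplingMat_mul_SynthesisMat hU]
  obtain ⟨d, rfl⟩ := hx
  rw [h_pinv] at hxt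
  subst hxt
  have h_consistent := mulVec_diagonal_inv_recovery hSA d
  refine ⟨⟨_, rfl⟩, h_consistent, ?_⟩
  rintro _ ⟨f, rfl⟩ hf hne
  exact sum_norm_sq_diagonal_inv_recovery_lt hSA hAA (hf.trans h_consistent.symm) hne

/-- Least-squares recovery with a subspace prior (unconstrained, non-direct-sum case):
the reconstruction lies in the PGS subspace, is consistent with the samples, and is the
unique minimal-norm element of the PGS subspace consistent with the samples. -/
theorem subspace_prior_least_squares_recovery (K M : ℕ) (hK : 0 < K) (hM : 0 < M)
    (U : Matrix (Fin (M * K)) (Fin (M * K)) ℂ)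
    (hU : U ∈ Matrix.unitaryGroup (Fin (M * K)) ℂ)
    (s a : Fin (M * K) → ℝ)
    (hRaa : ∀ i : Fin K, Rtil K M a a i ≠ 0)
    (x xt : Fin (M * K) → ℂ)
    (hx : ∃ d : Fin K → ℂ, x = (SynthesisMat K M U a).mulVec d)
    (hxt : xt = (SynthesisMat K M U a).mulVec
      ((Matrix.diagonal (fun i : Fin K =>
          if Rtil K M s a i ≠ 0 then ((Rtil K M s a i : ℂ))⁻¹ else 0)).mulVec
        ((SamplingMat K M U s).mulVec x))) :
    (∃ d : Fin K → ℂ, xt = (SynthesisMat K M U a).mulVec d)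
    ∧ (SamplingMat K M U s).mulVec xt = (SamplingMat K M U s).mulVec x
    ∧ ∀ y : Fin (M * K) → ℂ,
        (∃ d : Fin K → ℂ, y = (SynthesisMat K M U a).mulVec d) →
        (SamplingMat K M U s).mulVec y = (SamplingMat K M U s).mulVec x →
        y ≠ xt → ∑ i, ‖xt i‖ ^ 2 < ∑ i, ‖y i‖ ^ 2 :=
  subspace_prior_least_squares_recovery_general hU s a hx hxt
end
end

section
/- Predefined-reconstruction correction filter under the direct-sum condition: let w : {0,…,N−1} → ℝ be a reconstruction filter response and set W := U diag(w) D^T ∈ ℂ^{N×K}. If R̃_{sa}(i) ≠ 0 and R̃_{ww}(i) ≠ 0 for every i ∈ {0,…,K−1}, then W^*W, W^*A, and S^*A are all diagonal and the correction transform (W^* W)^{−1} W^* A (S^* A)^{−1} equals the K×K diagonal matrix with i-th diagonal entry R̃_{wa}(i)/(R̃_{sa}(i)·R̃_{ww}(i)). -/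
open Matrix BigOperators

noncomputable section

/-!
Taking adjoints turns `W^*` into the sampling matrix with filter `w`, so all three products have the
form `S^*A`. Unitarity of `U` cancels `U^*U`, leaving `D diag(f g) D^T`, which is diagonal because
distinct rows of `D` have disjoint supports: row `i` is the indicator of the fibre `{i + Kℓ}`, over
which it sums `f g` to `R̃_{fg}(i)`.
-/

theorem sum_eq_sum_fold {α : Type*} [AddCommMonoid α] (K M : ℕ) (f : Fin (M * K) → α) :
    ∑ j, f j = ∑ i : Fin K, ∑ ℓ : Fin M, f (fold K M i ℓ) := by
  have fold_eq (i : Fin K) (ℓ : Fin M) : fold K M i ℓ = finProdFinEquiv (ℓ, i) := rfl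
  simp only [fold_eq]
  rw [← finProdFinEquiv.sum_comp, Fintype.sum_prod_type_right]

theorem dmat_apply_fold (K M : ℕ) (k i : Fin K) (ℓ : Fin M) :
    Dmat K M k (fold K M i ℓ) = if i = k then 1 else 0 := by
  simp [Dmat, fold, Nat.mod_eq_of_lt i.isLt, Fin.ext_iff]

theorem dmat_mul_diagonal_mul_transpose (K M : ℕ) (d : Fin (M * K) → ℂ) :
    Dmat K M * diagonal d * (Dmat K M)ᵀ = diagonal fun i => ∑ ℓ, d (fold K M i ℓ) := by
  ext i k
  calc (Dmat K M * diagonal d * (Dmat K M)ᵀ) i k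
      = ∑ i', ∑ ℓ, Dmat K M i (fold K M i' ℓ) * d (fold K M i' ℓ)
          * Dmat K M k (fold K M i' ℓ) := by
        rw [mul_apply, sum_eq_sum_fold]
        simp only [mul_diagonal, transpose_apply]
    _ = diagonal (fun i => ∑ ℓ, d (fold K M i ℓ)) i k := by
        obtain rfl | hik := eq_or_ne i k
        · simp [dmat_apply_fold]
        · simp [dmat_apply_fold, hik, hik.symm]

theorem conjTranspose_transpose_dmat (K M : ℕ) : (Dmat K M)ᵀᴴ = Dmat K M := by
  ext i j
  simp [Dmat, apply_ite]

theorem conjTranspose_diagonal_ofReal {n : Type*} [DecidableEq n] (f : n → ℝ) :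
    (diagonal fun j => (f j : ℂ))ᴴ = diagonal fun j => (f j : ℂ) := by
  simp [diagonal_conjTranspose, Pi.star_def]

theorem conjTranspose_synthesisMat (K M : ℕ) (U : Matrix (Fin (M * K)) (Fin (M * K)) ℂ)
    (f : Fin (M * K) → ℝ) : (SynthesisMat K M U f)ᴴ = SamplingMat K M U f := by
  rw [SynthesisMat, SamplingMat, conjTranspose_mul, conjTranspose_mul,
    conjTranspose_transpose_dmat, conjTranspose_diagonal_ofReal, Matrix.mul_assoc]

theorem samplingMat_mul_synthesisMat (K M : ℕ) {U : Matrix (Fin (M * K)) (Fin (M * K)) ℂ}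
    (hU : U ∈ unitaryGroup (Fin (M * K)) ℂ) (f g : Fin (M * K) → ℝ) :
    SamplingMat K M U f * SynthesisMat K M U g = diagonal fun i => (Rtil K M f g i : ℂ) :=
  calc SamplingMat K M U f * SynthesisMat K M U g
      = Dmat K M * (diagonal (fun j => (f j : ℂ)) * (Uᴴ * U) * diagonal (fun j => (g j : ℂ)))
          * (Dmat K M)ᵀ := by
        simp only [SamplingMat, SynthesisMat, Matrix.mul_assoc]
    _ = Dmat K M * diagonal (fun j => (f j * g j : ℂ)) * (Dmat K M)ᵀ := by
        rw [← star_eq_conjTranspose, mem_unitaryGroup_iff'.mp hU, Matrix.mul_one,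
          diagonal_mul_diagonal]
    _ = diagonal fun i => (Rtil K M f g i : ℂ) := by
        simp only [dmat_mul_diagonal_mul_transpose, Rtil, Complex.ofReal_sum, Complex.ofReal_mul]

theorem inv_diagonal_of_ne_zero {n 𝕜 : Type*} [Fintype n] [DecidableEq n] [Field 𝕜] {d : n → 𝕜}
    (hd : ∀ i, d i ≠ 0) : (diagonal d)⁻¹ = diagonal fun i => (d i)⁻¹ := by
  refine inv_eq_right_inv ?_
  simp only [diagonal_mul_diagonal, mul_inv_cancel₀ (hd _), diagonal_one]

/-- Predefined-reconstruction correction filter under the direct-sum condition: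
`W^*W`, `W^*A` and `S^*A` are diagonal, and the correction transform
`(W^*W)⁻¹ W^*A (S^*A)⁻¹` is diagonal with entries `R̃_{wa}/(R̃_{sa}·R̃_{ww})`. -/
theorem predefined_correction_filter_DS (K M : ℕ) (hK : 0 < K) (hM : 0 < M)
    (U : Matrix (Fin (M * K)) (Fin (M * K)) ℂ)
    (hU : U ∈ Matrix.unitaryGroup (Fin (M * K)) ℂ)
    (s a w : Fin (M * K) → ℝ)
    (hRsa : ∀ i : Fin K, Rtil K M s a i ≠ 0)
    (hRww : ∀ i : Fin K, Rtil K M w w i ≠ 0) :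
    ((SynthesisMat K M U w)ᴴ * SynthesisMat K M U w).IsDiag
    ∧ ((SynthesisMat K M U w)ᴴ * SynthesisMat K M U a).IsDiag
    ∧ (SamplingMat K M U s * SynthesisMat K M U a).IsDiag
    ∧ ((SynthesisMat K M U w)ᴴ * SynthesisMat K M U w)⁻¹
        * ((SynthesisMat K M U w)ᴴ * SynthesisMat K M U a)
        * (SamplingMat K M U s * SynthesisMat K M U a)⁻¹
      = Matrix.diagonal (fun i : Fin K =>
          ((Rtil K M w a i / (Rtil K M s a i * Rtil K M w w i) : ℝ) : ℂ)) := by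
  have hsa (i : Fin K) : (Rtil K M s a i : ℂ) ≠ 0 := Complex.ofReal_ne_zero.mpr (hRsa i)
  have hww (i : Fin K) : (Rtil K M w w i : ℂ) ≠ 0 := Complex.ofReal_ne_zero.mpr (hRww i)
  simp only [conjTranspose_synthesisMat, samplingMat_mul_synthesisMat K M hU]
  refine ⟨isDiag_diagonal _, isDiag_diagonal _, isDiag_diagonal _, ?_⟩
  rw [inv_diagonal_of_ne_zero hww, inv_diagonal_of_ne_zero hsa, diagonal_mul_diagonal,
    diagonal_mul_diagonal]
  congr 1 with i
  push_cast
  field_simp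
end
end
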